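/- Let n ≥ 1 be an integer, let K ⊆ ℝⁿ be a compact set with nonempty interior whose topological boundary has Lebesgue measure zero, let b : K → ℝ be continuous, let δ > 0, and let Q : ℝⁿ → ℝ be a positive definite quadratic form. Then lim_{T→∞} T^{n/2} e^{−δT} · ∫∫_{{(t,u) ∈ [0,∞)×ℝⁿ : √t·u ∈ K and t ≤ T + b(√t·u)}} e^{δt} e^{−Q(u)} dt du = (1/δ) ∫_K e^{δ b(u)} du, where the double integral is with respect to the product of Lebesgue measure on [0,∞) and Lebesgue measure on ℝⁿ. (This is the paper's Lemma on the main-term asymptotic of the local-mixing integral over a truncated tube.) -/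

import Mathlib

/-!
Put `s = t - T` and `w = √t • u`. The integral becomes `e ^ (δ T)` times the integral over
`s ≥ -T` of `e ^ (δ s)` times the Gaussian mass, at time `t = s + T`, of the slice
`K_s = {w ∈ K | s ≤ b w}` contracted by `√t`. That mass is `t ^ (-n / 2)` times the integral of
`e ^ (-Q(w) / t)` over `K_s`, so it is asymptotic to `t ^ (-n / 2) μ(K_s)`.

The limit may be taken under the integral over `s`: the mass is at most the total Gaussian mass and
at most `t ^ (-n / 2) μ(K)`, hence `O((1 + t) ^ (-n / 2))` uniformly in `s`, and
`T ≤ (1 + |s|) (1 + t)` turns this into the integrable majorant `(1 + |s|) ^ (n / 2) e ^ (δ s)` on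
`s ≤ sup b`. The limit `∫ e ^ (δ s) μ(K_s) ds` is `(1 / δ) ∫_K e ^ (δ b)` by the layer cake formula.
-/

open MeasureTheory Real Filter Topology

section RealAnalysis

variable {p c δ : ℝ}

lemma exists_one_add_rpow_le_mul_exp (hp : 0 ≤ p) (hc : 0 < c) :
    ∃ M, 0 < M ∧ ∀ x, 0 ≤ x → (1 + x) ^ p ≤ M * exp (c * x) := by
  set a := c / (p + 1) with ha_def
  have ha : 0 < a := by positivity
  refine ⟨a⁻¹ ^ (p + 1) * exp c, by positivity, fun x hx => ?_⟩
  calc (1 + x) ^ p ≤ (1 + x) ^ (p + 1) :=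
        rpow_le_rpow_of_exponent_le (by linarith) (by linarith)
    _ = (a⁻¹ * (a * (1 + x))) ^ (p + 1) := by rw [inv_mul_cancel_left₀ ha.ne']
    _ ≤ (a⁻¹ * exp (a * (1 + x))) ^ (p + 1) := by
        gcongr
        linarith [add_one_le_exp (a * (1 + x))]
    _ = a⁻¹ ^ (p + 1) * exp (a * (1 + x) * (p + 1)) := by
        rw [mul_rpow (by positivity) (by positivity), ← exp_mul]
    _ = a⁻¹ ^ (p + 1) * exp c * exp (c * x) := by
        have hexponent : a * (1 + x) * (p + 1) = c + c * x := by
          rw [ha_def]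
          field_simp
        rw [hexponent, exp_add, mul_assoc]

lemma norm_exp_neg_le_one {x : ℝ} (hx : 0 ≤ x) : ‖exp (-x)‖ ≤ 1 := by
  rwa [norm_of_nonneg (exp_pos _).le, exp_le_one_iff, neg_nonpos]

lemma integrableOn_exp_mul_one_add_abs_rpow_Iic (hp : 0 ≤ p) (hδ : 0 < δ) (B : ℝ) :
    IntegrableOn (fun s => exp (δ * s) * (1 + |s|) ^ p) (Set.Iic B) := by
  obtain ⟨M, hM, hbound⟩ := exists_one_add_rpow_le_mul_exp hp (half_pos hδ)
  have hcont : Continuous fun s : ℝ => exp (δ * s) * (1 + |s|) ^ p := by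
    fun_prop (disch := intros; first | assumption | positivity)
  refine ((integrableOn_exp_mul_Iic (half_pos hδ) B).const_mul (M * exp (δ * |B|))).mono'
    hcont.aestronglyMeasurable (ae_restrict_of_forall_mem measurableSet_Iic fun s hs => ?_)
  have habs : |s| ≤ 2 * |B| - s := by
    rcases abs_cases s with h | h <;> linarith [le_abs_self B, abs_nonneg B, Set.mem_Iic.1 hs]
  have hexp : δ * s + δ / 2 * |s| ≤ δ * |B| + δ / 2 * s := by
    linarith [mul_le_mul_of_nonneg_left habs (half_pos hδ).le]
  calc ‖exp (δ * s) * (1 + |s|) ^ p‖ = exp (δ * s) * (1 + |s|) ^ p :=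
        norm_of_nonneg (by positivity)
    _ ≤ exp (δ * s) * (M * exp (δ / 2 * |s|)) := by gcongr; exact hbound _ (abs_nonneg s)
    _ = M * exp (δ * s + δ / 2 * |s|) := by rw [exp_add]; ring
    _ ≤ M * exp (δ * |B| + δ / 2 * s) := by gcongr
    _ = M * exp (δ * |B|) * exp (δ / 2 * s) := by rw [exp_add]; ring

lemma tendsto_rpow_mul_comp_const_add {f : ℝ → ℝ} {l : ℝ}
    (hf : Tendsto (fun t => t ^ p * f t) atTop (𝓝 l)) (s : ℝ) :
    Tendsto (fun T => T ^ p * f (s + T)) atTop (𝓝 l) := by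
  have hshift : Tendsto (fun T : ℝ => s + T) atTop atTop :=
    tendsto_atTop_add_const_left _ _ tendsto_id
  have hratio : Tendsto (fun T : ℝ => T / (s + T)) atTop (𝓝 1) := by
    have h := tendsto_const_nhds (x := (1 : ℝ)).sub (hshift.const_div_atTop s)
    rw [sub_zero] at h
    refine h.congr' ?_
    filter_upwards [hshift.eventually_gt_atTop 0] with T hT
    field_simp
    ring
  have hpow : Tendsto (fun T : ℝ => (T / (s + T)) ^ p) atTop (𝓝 1) := by
    simpa using hratio.rpow_const (p := p) (Or.inl one_ne_zero)
  have hprod := hpow.mul (hf.comp hshift)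
  rw [one_mul] at hprod
  refine hprod.congr' ?_
  filter_upwards [hshift.eventually_gt_atTop 0, eventually_ge_atTop 0] with T hsT hT
  rw [div_rpow hT hsT.le, Function.comp_apply, div_mul_eq_mul_div, mul_div_assoc,
    mul_div_cancel_left₀ _ (rpow_pos_of_pos hsT p).ne']

lemma rpow_mul_exp_mul_setIntegral_Ici (m : ℝ → ℝ → ℝ) (T : ℝ) :
    T ^ p * exp (-δ * T) * ∫ t in Set.Ici 0, exp (δ * t) * m t (t - T) =
      ∫ s in Set.Ici (-T), exp (δ * s) * (T ^ p * m (s + T) s) := by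
  have hshift := (measurePreserving_add_right volume T).setIntegral_preimage_emb
    (measurableEmbedding_addRight T) (fun t => exp (δ * t) * m t (t - T)) (Set.Ici 0)
  rw [Set.preimage_add_const_Ici, zero_sub] at hshift
  rw [← hshift, ← integral_const_mul]
  congr 1 with s
  have hexp : exp (-δ * T) * exp (δ * (s + T)) = exp (δ * s) := by rw [← exp_add]; ring_nf
  rw [add_sub_cancel_right, ← hexp]
  ring

lemma norm_exp_mul_rpow_mul_le {x C s T : ℝ} (hp : 0 ≤ p) (hT : 0 ≤ T) (hsT : 0 ≤ s + T)
    (hxC : (1 + (s + T)) ^ p * |x| ≤ C) :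
    ‖exp (δ * s) * (T ^ p * x)‖ ≤ C * (exp (δ * s) * (1 + |s|) ^ p) := by
  have hT_le : T ≤ (1 + |s|) * (1 + (s + T)) := by
    nlinarith [neg_abs_le s, abs_nonneg s]
  calc ‖exp (δ * s) * (T ^ p * x)‖ = exp (δ * s) * (T ^ p * |x|) := by
        rw [norm_mul, norm_mul, norm_of_nonneg (exp_pos _).le, norm_of_nonneg (rpow_nonneg hT p),
          norm_eq_abs]
    _ ≤ exp (δ * s) * (((1 + |s|) * (1 + (s + T))) ^ p * |x|) := by gcongr
    _ = exp (δ * s) * ((1 + |s|) ^ p * ((1 + (s + T)) ^ p * |x|)) := by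
        rw [mul_rpow (by positivity) (by positivity), mul_assoc]
    _ ≤ exp (δ * s) * ((1 + |s|) ^ p * C) := by gcongr
    _ = C * (exp (δ * s) * (1 + |s|) ^ p) := by ring

theorem tendsto_rpow_mul_exp_mul_setIntegral_Ici {B C : ℝ} {m : ℝ → ℝ → ℝ} {g : ℝ → ℝ}
    (hp : 0 ≤ p) (hδ : 0 < δ)
    (hmeas : ∀ T, AEStronglyMeasurable fun t => m t (t - T))
    (hsupp : ∀ t s, B < s → m t s = 0)
    (hbound : ∀ t s, 0 ≤ t → (1 + t) ^ p * |m t s| ≤ C)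
    (hlim : ∀ s, Tendsto (fun t => t ^ p * m t s) atTop (𝓝 (g s))) :
    Tendsto (fun T => T ^ p * exp (-δ * T) * ∫ t in Set.Ici 0, exp (δ * t) * m t (t - T))
      atTop (𝓝 (∫ s, exp (δ * s) * g s)) := by
  simp_rw [rpow_mul_exp_mul_setIntegral_Ici, ← integral_indicator measurableSet_Ici]
  refine tendsto_integral_filter_of_dominated_convergence
    ((Set.Iic B).indicator fun s => C * (exp (δ * s) * (1 + |s|) ^ p)) ?_ ?_
    ((integrable_indicator_iff measurableSet_Iic).2
      ((integrableOn_exp_mul_one_add_abs_rpow_Iic hp hδ B).const_mul C)) (.of_forall fun s => ?_)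
  · refine .of_forall fun T => AEStronglyMeasurable.indicator ?_ measurableSet_Ici
    have hm := (hmeas T).comp_measurePreserving (measurePreserving_add_right volume T)
    simp only [Function.comp_def, add_sub_cancel_right] at hm
    exact (by fun_prop : Continuous fun s => exp (δ * s)).aestronglyMeasurable.mul
      (hm.const_mul (T ^ p))
  · filter_upwards [eventually_ge_atTop 0] with T hT
    refine .of_forall fun s => ?_
    have hC : 0 ≤ C := le_trans (by positivity) (hbound 0 s le_rfl)
    rcases le_or_gt s B with hs | hs
    · rw [Set.indicator_of_mem (Set.mem_Iic.2 hs)]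
      by_cases hsT : s ∈ Set.Ici (-T)
      · have hsT' : 0 ≤ s + T := neg_le_iff_add_nonneg.1 hsT
        rw [Set.indicator_of_mem hsT]
        exact norm_exp_mul_rpow_mul_le hp hT hsT' (hbound _ _ hsT')
      · rw [Set.indicator_of_notMem hsT, norm_zero]
        positivity
    · simp [hsupp _ _ hs, Set.indicator_of_notMem (Set.notMem_Iic.2 hs)]
  · refine ((tendsto_rpow_mul_comp_const_add (hlim s) s).const_mul (exp (δ * s))).congr' ?_
    filter_upwards [eventually_ge_atTop (-s)] with T hT
    rw [Set.indicator_of_mem (Set.mem_Ici.2 (by linarith)), add_comm]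

end RealAnalysis

section Superlevel

variable {α : Type*} [MeasurableSpace α] {ν : Measure α} {K : Set α} {b : α → ℝ} {δ : ℝ}

lemma measurableSet_hypograph (hK : MeasurableSet K) (hb : Measurable fun u : K => b u) :
    MeasurableSet {q : ℝ × α | q.2 ∈ K ∧ q.1 ≤ b q.2} := by
  have himage : {q : ℝ × α | q.2 ∈ K ∧ q.1 ≤ b q.2} =
      Prod.map id Subtype.val '' {q : ℝ × K | q.1 ≤ b q.2} := by
    ext ⟨s, w⟩
    simp [and_comm]
  rw [himage]
  exact (MeasurableEmbedding.id.prodMap (.subtype_coe hK)).measurableSet_image.2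
    (measurableSet_le measurable_fst (hb.comp measurable_snd))

lemma integrableOn_exp_mul_of_bddAbove (hK : MeasurableSet K) (hKfin : ν K ≠ ⊤)
    (hb : Measurable fun u : K => b u) (hbdd : BddAbove (b '' K)) (hδ : 0 ≤ δ) :
    IntegrableOn (fun u => exp (δ * b u)) K ν := by
  obtain ⟨B, hB⟩ := hbdd
  have hmeas := ((aemeasurable_restrict_of_measurable_subtype (μ := ν) hK hb).const_mul δ).exp
  refine .of_bound hKfin.lt_top hmeas.aestronglyMeasurable (exp (δ * B))
    (ae_restrict_of_forall_mem hK fun u hu => ?_)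
  rw [norm_of_nonneg (exp_pos _).le]
  gcongr
  exact hB ⟨u, hu, rfl⟩

theorem integral_exp_mul_measureReal_le {f : α → ℝ} (hδ : 0 < δ)
    (hf : Integrable (fun x => exp (δ * f x)) ν) :
    ∫ s, exp (δ * s) * ν.real {x | s ≤ f x} = 1 / δ * ∫ x, exp (δ * f x) ∂ν := by
  have himage : (fun s => exp (δ * s)) '' Set.univ = Set.Ioi 0 := by
    rw [Set.image_univ, ← range_exp]
    exact (mul_left_surjective₀ hδ.ne').range_comp exp
  have hderiv (s : ℝ) : HasDerivAt (fun s => exp (δ * s)) (exp (δ * s) * δ) s := by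
    simpa using ((hasDerivAt_id s).const_mul δ).exp
  have hinj : Set.InjOn (fun s => exp (δ * s)) Set.univ :=
    (exp_injective.comp (mul_right_injective₀ hδ.ne')).injOn
  rw [hf.integral_eq_integral_meas_le (.of_forall fun _ => (exp_pos _).le), ← himage,
    integral_image_eq_integral_abs_deriv_smul .univ (fun s _ => (hderiv s).hasDerivWithinAt) hinj,
    setIntegral_univ, ← integral_const_mul]
  congr 1 with s
  simp only [exp_le_exp, mul_le_mul_iff_right₀ hδ, smul_eq_mul, abs_of_pos (mul_pos (exp_pos _) hδ)]
  field_simp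

end Superlevel

section QuadraticForm

variable {E : Type*} [NormedAddCommGroup E] [NormedSpace ℝ E] [FiniteDimensional ℝ E]
  {Q : QuadraticForm ℝ E}

lemma continuous_quadraticForm (Q : QuadraticForm ℝ E) : Continuous Q := by
  have hQ : ⇑Q = fun x => (QuadraticMap.associated (R := ℝ) Q).toContinuousBilinearMap x x := by
    ext x
    rw [LinearMap.toContinuousBilinearMap_apply, QuadraticMap.associated_eq_self_apply]
  rw [hQ]
  fun_prop

lemma exists_pos_mul_sq_norm_le_of_posDef (hQ : Q.PosDef) :
    ∃ c, 0 < c ∧ ∀ u, c * ‖u‖ ^ 2 ≤ Q u := by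
  obtain ⟨c, hc, hmin⟩ := (isCompact_sphere (0 : E) 1).exists_forall_le'
    (continuous_quadraticForm Q).continuousOn fun v hv => hQ v (ne_zero_of_mem_unit_sphere ⟨v, hv⟩)
  refine ⟨c, hc, fun u => ?_⟩
  rcases eq_or_ne u 0 with rfl | hu
  · simp
  have hu' : ‖u‖ ≠ 0 := norm_ne_zero_iff.2 hu
  calc c * ‖u‖ ^ 2 ≤ Q (‖u‖⁻¹ • u) * ‖u‖ ^ 2 := by
        gcongr
        exact hmin _ (by simp [norm_smul, hu'])
    _ = Q u := by
        rw [QuadraticMap.map_smul, smul_eq_mul]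
        field_simp

end QuadraticForm

section Gaussian

open Module
open scoped Pointwise

variable {E : Type*} [NormedAddCommGroup E] [NormedSpace ℝ E] [MeasurableSpace E]
  {Q : QuadraticForm ℝ E} {μ : Measure E}

/-- The mass that the density `exp (-Q)` gives to the contracted set `t ^ (-1 / 2) • A`, written
as a preimage so that it also makes sense at `t = 0`. -/
noncomputable def dilatedMass (Q : QuadraticForm ℝ E) (μ : Measure E) (t : ℝ) (A : Set E) : ℝ :=
  ∫ u in (√t • ·) ⁻¹' A, exp (-Q u) ∂μ

lemma dilatedMass_nonneg (t : ℝ) (A : Set E) : 0 ≤ dilatedMass Q μ t A :=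
  integral_nonneg fun _ => (exp_pos _).le

variable [FiniteDimensional ℝ E] [BorelSpace E] [μ.IsAddHaarMeasure]

theorem integrable_exp_neg_of_posDef (hQ : Q.PosDef) : Integrable (fun u => exp (-Q u)) μ := by
  obtain ⟨c, hc, hcQ⟩ := exists_pos_mul_sq_norm_le_of_posDef hQ
  set r : ℝ := finrank ℝ E + 1
  obtain ⟨M, -, hM⟩ := exists_one_add_rpow_le_mul_exp (p := r / 2) (by positivity) hc
  have hcont := continuous_quadraticForm Q
  refine ((integrable_rpow_neg_one_add_norm_sq (μ := μ) (lt_add_one _)).const_mul M).mono'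
    (by fun_prop : Continuous fun u => exp (-Q u)).aestronglyMeasurable (.of_forall fun u => ?_)
  rw [norm_of_nonneg (exp_pos _).le]
  calc exp (-Q u) ≤ exp (-(c * ‖u‖ ^ 2)) := by gcongr; exact hcQ u
    _ ≤ M * (1 + ‖u‖ ^ 2) ^ (-r / 2) := by
        rw [exp_neg, neg_div, rpow_neg (by positivity), ← div_eq_mul_inv,
          inv_eq_one_div, div_le_div_iff₀ (by positivity) (by positivity), one_mul]
        calc (1 + ‖u‖ ^ 2) ^ (r / 2) ≤ M * exp (c * ‖u‖ ^ 2) := hM _ (sq_nonneg _)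
          _ = _ := by ring

lemma dilatedMass_le_integral (hQ : Q.PosDef) (t : ℝ) (A : Set E) :
    dilatedMass Q μ t A ≤ ∫ u, exp (-Q u) ∂μ :=
  setIntegral_le_integral (integrable_exp_neg_of_posDef hQ) (.of_forall fun _ => (exp_pos _).le)

lemma rpow_mul_dilatedMass {t : ℝ} (ht : 0 < t) (A : Set E) :
    t ^ ((finrank ℝ E : ℝ) / 2) * dilatedMass Q μ t A = ∫ w in A, exp (-(Q w / t)) ∂μ := by
  have hsqrt : 0 < √t := sqrt_pos.2 ht
  have hQ (u : E) : Q (√t • u) / t = Q u := by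
    rw [QuadraticMap.map_smul, mul_self_sqrt ht.le, smul_eq_mul, mul_div_cancel_left₀ _ ht.ne']
  have hpow : t ^ ((finrank ℝ E : ℝ) / 2) = √t ^ finrank ℝ E := by
    rw [sqrt_eq_rpow, ← rpow_mul_natCast ht.le]
    ring_nf
  have hset : √t • ((√t • ·) ⁻¹' A) = A := by
    rw [Set.preimage_smul₀ hsqrt.ne', smul_inv_smul₀ hsqrt.ne']
  have hscale := Measure.setIntegral_comp_smul_of_pos μ (fun w => exp (-(Q w / t)))
    ((√t • ·) ⁻¹' A) hsqrt
  simp only [hQ, hset, smul_eq_mul] at hscale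
  rw [dilatedMass, hscale, hpow, mul_inv_cancel_left₀ (by positivity)]

lemma rpow_mul_dilatedMass_le (hQ : Q.PosDef) {t : ℝ} (ht : 0 < t) {A : Set E} (hA : μ A ≠ ⊤) :
    t ^ ((finrank ℝ E : ℝ) / 2) * dilatedMass Q μ t A ≤ μ.real A := by
  rw [rpow_mul_dilatedMass ht, ← one_mul (μ.real A)]
  exact (le_norm_self _).trans <|
    norm_setIntegral_le_of_norm_le_const hA.lt_top fun w _ =>
      norm_exp_neg_le_one (div_nonneg (hQ.nonneg w) ht.le)

lemma one_add_rpow_mul_dilatedMass_le (hQ : Q.PosDef) {t : ℝ} (ht : 0 ≤ t) {A : Set E}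
    (hA : μ A ≠ ⊤) :
    (1 + t) ^ ((finrank ℝ E : ℝ) / 2) * dilatedMass Q μ t A ≤
      2 ^ ((finrank ℝ E : ℝ) / 2) * (∫ u, exp (-Q u) ∂μ + μ.real A) := by
  have hmass : 0 ≤ dilatedMass Q μ t A := dilatedMass_nonneg t A
  rcases le_or_gt t 1 with h1 | h1
  · gcongr
    · linarith
    · linarith [dilatedMass_le_integral (μ := μ) hQ t A, measureReal_nonneg (μ := μ) (s := A)]
  · have ht' : 0 < t := by linarith
    calc (1 + t) ^ ((finrank ℝ E : ℝ) / 2) * dilatedMass Q μ t A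
        ≤ (2 * t) ^ ((finrank ℝ E : ℝ) / 2) * dilatedMass Q μ t A := by
          gcongr
          linarith
      _ = 2 ^ ((finrank ℝ E : ℝ) / 2) *
            (t ^ ((finrank ℝ E : ℝ) / 2) * dilatedMass Q μ t A) := by
          rw [mul_rpow zero_le_two ht, mul_assoc]
      _ ≤ 2 ^ ((finrank ℝ E : ℝ) / 2) * (∫ u, exp (-Q u) ∂μ + μ.real A) := by
          gcongr
          have hint : 0 ≤ ∫ u, exp (-Q u) ∂μ := integral_nonneg fun _ => (exp_pos _).le
          linarith [rpow_mul_dilatedMass_le hQ ht' hA]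

theorem tendsto_rpow_mul_dilatedMass (hQ : Q.PosDef) {A : Set E} (hA : μ A ≠ ⊤) :
    Tendsto (fun t => t ^ ((finrank ℝ E : ℝ) / 2) * dilatedMass Q μ t A) atTop
      (𝓝 (μ.real A)) := by
  have hcont := continuous_quadraticForm Q
  have hdct : Tendsto (fun t => ∫ w in A, exp (-(Q w / t)) ∂μ) atTop
      (𝓝 (∫ _ in A, (1 : ℝ) ∂μ)) := by
    refine tendsto_integral_filter_of_dominated_convergence (fun _ => 1) ?_ ?_
      (integrableOn_const hA) (.of_forall fun w => ?_)
    · exact .of_forall fun t =>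
        (by fun_prop : Continuous fun w => exp (-(Q w / t))).aestronglyMeasurable
    · filter_upwards [eventually_ge_atTop 0] with t ht
      exact .of_forall fun w => norm_exp_neg_le_one (div_nonneg (hQ.nonneg w) ht)
    · simpa using (tendsto_id.const_div_atTop (Q w)).neg.rexp
  rw [setIntegral_const, smul_eq_mul, mul_one] at hdct
  refine hdct.congr' ?_
  filter_upwards [eventually_gt_atTop 0] with t ht
  rw [rpow_mul_dilatedMass ht]

end Gaussian

section Tube

open Module

variable {E : Type*} [NormedAddCommGroup E] [NormedSpace ℝ E]

/-- The map `(t, u) ↦ (t - T, √t • u)`. In these coordinates the truncated tubes of all `T` are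
given by one and the same set. -/
noncomputable def tubeMap (T : ℝ) (p : ℝ × E) : ℝ × E := (p.1 - T, √p.1 • p.2)

/-- The part of `[0, ∞) × E` that `tubeMap T` sends into `H`. The hypograph of a function `b` on
`K` gives the tube over `K` truncated at height `T + b`. -/
def truncatedTube (H : Set (ℝ × E)) (T : ℝ) : Set (ℝ × E) := Set.Ici 0 ×ˢ Set.univ ∩ tubeMap T ⁻¹' H

lemma continuous_tubeMap (T : ℝ) : Continuous (tubeMap T : ℝ × E → ℝ × E) := by
  unfold tubeMap
  fun_prop

variable [MeasurableSpace E] [BorelSpace E] {μ : Measure E} {Q : QuadraticForm ℝ E}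
  {H : Set (ℝ × E)} {K : Set E} {B δ : ℝ}

lemma dilatedMass_slice (hH : MeasurableSet H) (T t : ℝ) :
    dilatedMass Q μ t (Prod.mk (t - T) ⁻¹' H) =
      ∫ u, (tubeMap T ⁻¹' H).indicator (fun p => exp (-Q p.2)) (t, u) ∂μ := by
  have hslice : MeasurableSet ((√t • ·) ⁻¹' (Prod.mk (t - T) ⁻¹' H)) :=
    measurable_const_smul _ (measurable_prodMk_left hH)
  rw [dilatedMass, ← integral_indicator hslice]
  rfl

variable [FiniteDimensional ℝ E]

lemma aestronglyMeasurable_dilatedMass_slice [SFinite μ] (hH : MeasurableSet H) (T : ℝ) :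
    AEStronglyMeasurable fun t => dilatedMass Q μ t (Prod.mk (t - T) ⁻¹' H) := by
  have hcont := continuous_quadraticForm Q
  have hmeas : StronglyMeasurable ((tubeMap T ⁻¹' H).indicator fun p => exp (-Q p.2)) :=
    (by fun_prop : Continuous fun p : ℝ × E => exp (-Q p.2)).stronglyMeasurable.indicator
      ((continuous_tubeMap T).measurable hH)
  simp_rw [dilatedMass_slice hH]
  exact hmeas.integral_prod_right'.aestronglyMeasurable

variable [μ.IsAddHaarMeasure]

lemma integrableOn_truncatedTube (hQ : Q.PosDef) (hδ : 0 < δ) (hHB : ∀ q ∈ H, q.1 ≤ B) (T : ℝ) :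
    IntegrableOn (fun p : ℝ × E => exp (δ * p.1) * exp (-Q p.2)) (truncatedTube H T)
      (volume.prod μ) := by
  have hsub : truncatedTube H T ⊆ Set.Iic (T + B) ×ˢ Set.univ := fun p hp =>
    ⟨Set.mem_Iic.2 (sub_le_iff_le_add'.1 (hHB _ hp.2)), Set.mem_univ _⟩
  refine IntegrableOn.mono_set ?_ hsub
  rw [IntegrableOn, ← Measure.prod_restrict, Measure.restrict_univ]
  exact Integrable.mul_prod (integrableOn_exp_mul_Iic hδ _) (integrable_exp_neg_of_posDef hQ)

lemma setIntegral_truncatedTube (hQ : Q.PosDef) (hδ : 0 < δ) (hH : MeasurableSet H)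
    (hHB : ∀ q ∈ H, q.1 ≤ B) (T : ℝ) :
    ∫ p in truncatedTube H T, exp (δ * p.1) * exp (-Q p.2) ∂volume.prod μ =
      ∫ t in Set.Ici 0, exp (δ * t) * dilatedMass Q μ t (Prod.mk (t - T) ⁻¹' H) := by
  have hpre : MeasurableSet (tubeMap T ⁻¹' H) := (continuous_tubeMap T).measurable hH
  have hint := integrableOn_truncatedTube (μ := μ) hQ hδ hHB T
  rw [truncatedTube, Set.inter_comm] at hint
  rw [truncatedTube, ← setIntegral_indicator hpre,
    setIntegral_prod _ ((integrableOn_indicator_iff hpre).2 hint)]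
  simp_rw [setIntegral_univ, Set.indicator_mul_right, integral_const_mul, dilatedMass_slice hH]

theorem tendsto_setIntegral_truncatedTube (hQ : Q.PosDef) (hδ : 0 < δ) (hH : MeasurableSet H)
    (hK : μ K ≠ ⊤) (hHK : H ⊆ Set.Iic B ×ˢ K) :
    Tendsto (fun T => T ^ ((finrank ℝ E : ℝ) / 2) * exp (-δ * T) *
        ∫ p in truncatedTube H T, exp (δ * p.1) * exp (-Q p.2) ∂volume.prod μ)
      atTop (𝓝 (∫ s, exp (δ * s) * μ.real (Prod.mk s ⁻¹' H))) := by
  have hsub (s : ℝ) : Prod.mk s ⁻¹' H ⊆ K := fun w hw => (hHK hw).2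
  have hfin (s : ℝ) : μ (Prod.mk s ⁻¹' H) ≠ ⊤ := measure_ne_top_of_subset (hsub s) hK
  simp_rw [setIntegral_truncatedTube hQ hδ hH fun _ hq => (hHK hq).1]
  refine tendsto_rpow_mul_exp_mul_setIntegral_Ici
    (m := fun t s => dilatedMass Q μ t (Prod.mk s ⁻¹' H)) (B := B)
    (C := 2 ^ ((finrank ℝ E : ℝ) / 2) * (∫ u, exp (-Q u) ∂μ + μ.real K))
    (by positivity) hδ (aestronglyMeasurable_dilatedMass_slice hH) (fun t s hs => ?_)
    (fun t s ht => ?_) fun s => tendsto_rpow_mul_dilatedMass hQ (hfin s)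
  · have hempty : Prod.mk s ⁻¹' H = ∅ :=
      Set.eq_empty_of_forall_notMem fun w hw => hs.not_ge (hHK hw).1
    simp [hempty, dilatedMass]
  · rw [abs_of_nonneg (dilatedMass_nonneg t _)]
    refine (one_add_rpow_mul_dilatedMass_le hQ ht (hfin s)).trans ?_
    gcongr
    exact hsub s

theorem stmt_0_general {b : E → ℝ} (hK : MeasurableSet K) (hKfin : μ K ≠ ⊤)
    (hb : Measurable fun u : K => b u) (hbdd : BddAbove (b '' K)) (hδ : 0 < δ) (hQ : Q.PosDef) :
    Tendsto (fun T => T ^ ((finrank ℝ E : ℝ) / 2) * exp (-δ * T) *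
        ∫ p in {p : ℝ × E | 0 ≤ p.1 ∧ √p.1 • p.2 ∈ K ∧ p.1 ≤ T + b (√p.1 • p.2)},
          exp (δ * p.1) * exp (-Q p.2) ∂volume.prod μ)
      atTop (𝓝 (1 / δ * ∫ u in K, exp (δ * b u) ∂μ)) := by
  set H : Set (ℝ × E) := {q | q.2 ∈ K ∧ q.1 ≤ b q.2} with hH
  have htube (T : ℝ) : {p : ℝ × E | 0 ≤ p.1 ∧ √p.1 • p.2 ∈ K ∧ p.1 ≤ T + b (√p.1 • p.2)} =
      truncatedTube H T := by
    ext p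
    simp [truncatedTube, tubeMap, hH, add_comm]
  have hslice (s : ℝ) : μ.real (Prod.mk s ⁻¹' H) = (μ.restrict K).real {w | s ≤ b w} := by
    rw [measureReal_restrict_apply' hK, Set.inter_comm]
    rfl
  have hint := integrableOn_exp_mul_of_bddAbove hK hKfin hb hbdd hδ.le
  simp_rw [htube, ← integral_exp_mul_measureReal_le hδ hint, ← hslice]
  obtain ⟨B, hB⟩ := hbdd
  exact tendsto_setIntegral_truncatedTube hQ hδ (measurableSet_hypograph hK hb) hKfin
    fun q hq => ⟨hq.2.trans (hB ⟨q.2, hq.1, rfl⟩), hq.1⟩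

end Tube

/-- Main-term asymptotic of the local-mixing integral over a truncated tube. -/
theorem stmt_0 (n : ℕ) (hn : 1 ≤ n)
    (K : Set (EuclideanSpace ℝ (Fin n))) (hK : IsCompact K)
    (hKint : (interior K).Nonempty) (hKfr : volume (frontier K) = 0)
    (b : EuclideanSpace ℝ (Fin n) → ℝ) (hb : ContinuousOn b K)
    (δ : ℝ) (hδ : 0 < δ)
    (Q : QuadraticForm ℝ (EuclideanSpace ℝ (Fin n)))
    (hQ : ∀ u, u ≠ 0 → 0 < Q u) :
    Tendsto (fun T : ℝ =>
      T ^ ((n : ℝ) / 2) * Real.exp (-δ * T) *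
        ∫ p in {p : ℝ × EuclideanSpace ℝ (Fin n) |
            0 ≤ p.1 ∧ Real.sqrt p.1 • p.2 ∈ K ∧ p.1 ≤ T + b (Real.sqrt p.1 • p.2)},
          Real.exp (δ * p.1) * Real.exp (-(Q p.2)) ∂(volume.prod volume))
      atTop (𝓝 ((1 / δ) * ∫ u in K, Real.exp (δ * b u))) := by
  simpa only [finrank_euclideanSpace_fin] using stmt_0_general hK.measurableSet
    hK.measure_lt_top.ne hb.domRestrict.measurable (hK.bddAbove_image hb) hδ hQ
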